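/- arXiv:math-ph/0610053 — 2 statements merged into one kernel-verified Lean document; each statement's English description precedes it below -/
import Mathlib

section
/- (Graded Jacobi identity) In the endomorphism operad of a K-module L, the Gerstenhaber brackets satisfy, for all homogeneous f, g, h: (−1)^{|f||h|} [[f, g], h] + (−1)^{|g||f|} [[g, h], f] + (−1)^{|h||g|} [[h, f], g] = 0; in particular the commutator algebra is a graded Lie algebra with respect to the reduced degree. -/
/-!
The total composition `•` satisfies a graded pre-Lie identity, and the Jacobi identity is a formal
consequence of it.

For `i < m` the indices `j < m + n - 1` of `(f ∘ᵢ g) ∘ⱼ h` fall into three blocks.  For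
`i ≤ j < i + n` the map `h` is inserted into `g`, and these terms add up to `f • (g • h)`
(`pcomp_pcomp_nested`).  For `j < i` the map `h` is inserted into `f` to the left of `g`; the sum of
these terms is `leftSum m n p f g h`.  For `j ≥ i + n` it is inserted to the right of `g`, and
composing in the other order turns the term into `(-1)^{|g||h|} (f ∘ⱼ₋ₙ₊₁ h) ∘ᵢ g`
(`pcomp_pcomp_disjoint`), a term of `leftSum m p n f h g`.  Hence (`tcomp_tcomp`)
`(f • g) • h = f • (g • h) + leftSum f g h + (-1)^{|g||h|} leftSum f h g`,
so the associator is graded symmetric in `g, h`.  Expanding the three double brackets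
(`gbr_gbr`) and substituting this for all six products `(a • b) • c`, everything cancels.
-/

variable {K : Type*} [CommRing K] {L : Type*} [AddCommGroup L] [Module K L]

/-- `(-1)^z` for an integer exponent `z`. -/
def sgn (z : ℤ) : ℤ := (-1) ^ z.natAbs

/-- The underlying function (on `ℕ`-indexed families of elements of `L`) of an
`n`-multilinear map `f ∈ Eⁿ`; equality of such functions is equivalent to equality
of the multilinear maps. -/
def toFn {n : ℕ} (f : MultilinearMap K (fun _ : Fin n => L) L) : (ℕ → L) → L :=
  fun x => f fun a => x a.val

/-- Partial composition `F ∘ᵢ G`, where `n` is the arity (degree) of `G`: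
`(f ∘ᵢ g)(x_0, …) = (-1)^{i(n-1)} f(x_0, …, x_{i-1}, g(x_i, …, x_{i+n-1}), x_{i+n}, …)`. -/
def pcomp (i n : ℕ) (F G : (ℕ → L) → L) : (ℕ → L) → L :=
  fun x => sgn ((i : ℤ) * ((n : ℤ) - 1)) •
    F fun k => if k < i then x k else if k = i then G (fun j => x (i + j)) else x (k + n - 1)

/-- Total composition `F • G := Σ_{i=0}^{m-1} F ∘ᵢ G`, where `m, n` are the arities of `F, G`. -/
def tcomp (m n : ℕ) (F G : (ℕ → L) → L) : (ℕ → L) → L :=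
  ∑ i ∈ Finset.range m, pcomp i n F G

/-- Gerstenhaber bracket `[F, G] := F • G - (-1)^{|F||G|} G • F` for arities `m, n` of `F, G`. -/
def gbr (m n : ℕ) (F G : (ℕ → L) → L) : (ℕ → L) → L :=
  tcomp m n F G - sgn (((m : ℤ) - 1) * ((n : ℤ) - 1)) • tcomp n m G F

/-! ### Signs -/

lemma sgn_eq_ite (z : ℤ) : sgn z = if Even z then 1 else -1 := by
  unfold sgn
  split_ifs with h
  · exact (Int.natAbs_even.mpr h).neg_one_pow
  · exact (Int.natAbs_odd.mpr (Int.not_even_iff_odd.mp h)).neg_one_pow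

lemma sgn_add (a b : ℤ) : sgn (a + b) = sgn a * sgn b := by
  simp only [sgn_eq_ite, Int.even_add]
  by_cases ha : Even a <;> by_cases hb : Even b <;> simp [ha, hb]

lemma sgn_cases (z : ℤ) : sgn z = 1 ∨ sgn z = -1 := by
  rw [sgn_eq_ite]
  split_ifs <;> simp

/-! ### Multilinearity at the level of functions on sequences -/

lemma toFn_congr {n : ℕ} (f : MultilinearMap K (fun _ : Fin n => L) L) {x y : ℕ → L}
    (hxy : ∀ k < n, x k = y k) : toFn f x = toFn f y :=
  congrArg f (funext fun a => hxy a.val a.isLt)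

/-- The arguments at which `F` is evaluated in `F ∘ᵢ G`, with `a` the value of `G`. -/
def insertAt (i n : ℕ) (x : ℕ → L) (a : L) : ℕ → L :=
  fun k => if k < i then x k else if k = i then a else x (k + n - 1)

lemma pcomp_apply (i n : ℕ) (F G : (ℕ → L) → L) (x : ℕ → L) :
    pcomp i n F G x =
      sgn ((i : ℤ) * ((n : ℤ) - 1)) • F (insertAt i n x (G fun j => x (i + j))) := rfl

/-- A multilinear map, as an additive function of the entry inserted at position `i`. -/
def slotHom {m : ℕ} (f : MultilinearMap K (fun _ : Fin m => L) L) (i n : ℕ) (hi : i < m)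
    (x : ℕ → L) : L →+ L where
  toFun a := toFn f (insertAt i n x a)
  map_zero' := f.map_coord_zero ⟨i, hi⟩ (by simp [insertAt])
  map_add' a b := by
    have key : ∀ c : L, toFn f (insertAt i n x c) =
        f (Function.update (fun k : Fin m => insertAt i n x 0 k.val) ⟨i, hi⟩ c) := by
      intro c
      refine congrArg f (funext fun k => ?_)
      rcases eq_or_ne k ⟨i, hi⟩ with rfl | hk
      · simp [insertAt]
      · have hk' : k.val ≠ i := fun h => hk (Fin.ext h)
        simp [insertAt, Function.update_of_ne hk, hk']
    simp only [key, MultilinearMap.map_update_add]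

lemma pcomp_eq_slotHom {m : ℕ} (f : MultilinearMap K (fun _ : Fin m => L) L) (i n : ℕ)
    (hi : i < m) (G : (ℕ → L) → L) (x : ℕ → L) :
    pcomp i n (toFn f) G x =
      sgn ((i : ℤ) * ((n : ℤ) - 1)) • slotHom f i n hi x (G fun j => x (i + j)) := rfl

/-! ### Linearity of the compositions -/

lemma pcomp_sum_left {ι : Type*} (s : Finset ι) (i n : ℕ) (F : ι → (ℕ → L) → L)
    (G : (ℕ → L) → L) : pcomp i n (∑ a ∈ s, F a) G = ∑ a ∈ s, pcomp i n (F a) G := by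
  funext x
  simp only [Finset.sum_apply, pcomp_apply, Finset.smul_sum]

lemma tcomp_sub_smul_left (m n : ℕ) (c : ℤ) (F F' G : (ℕ → L) → L) :
    tcomp m n (F - c • F') G = tcomp m n F G - c • tcomp m n F' G := by
  simp only [tcomp, Finset.smul_sum, ← Finset.sum_sub_distrib]
  refine Finset.sum_congr rfl fun i _ => ?_
  funext x
  simp only [pcomp_apply, Pi.sub_apply, Pi.smul_apply, smul_sub]
  rw [smul_comm]

lemma tcomp_sub_smul_right {m : ℕ} (f : MultilinearMap K (fun _ : Fin m => L) L) (n : ℕ) (c : ℤ)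
    (G G' : (ℕ → L) → L) :
    tcomp m n (toFn f) (G - c • G') = tcomp m n (toFn f) G - c • tcomp m n (toFn f) G' := by
  simp only [tcomp, Finset.smul_sum, ← Finset.sum_sub_distrib]
  refine Finset.sum_congr rfl fun i hi => ?_
  funext x
  simp only [pcomp_eq_slotHom f i n (Finset.mem_range.mp hi), Pi.sub_apply, Pi.smul_apply,
    map_sub, map_zsmul, smul_sub]
  rw [smul_comm]

lemma tcomp_zero_right {m : ℕ} (f : MultilinearMap K (fun _ : Fin m => L) L) (n : ℕ) :
    tcomp m n (toFn f) 0 = 0 := by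
  refine Finset.sum_eq_zero fun i hi => ?_
  funext x
  simp [pcomp_eq_slotHom f i n (Finset.mem_range.mp hi)]

/-! ### The pre-Lie identity -/

/-- Associativity when `H` is inserted into the arguments of `G`.  Multilinearity of `f` is needed
to move the sign of `G ∘ₖ H` out of the `i`-th entry. -/
lemma pcomp_pcomp_nested {m n : ℕ} (f : MultilinearMap K (fun _ : Fin m => L) L) (p i k : ℕ)
    (hi : i < m) (hk : k < n) (G H : (ℕ → L) → L) :
    pcomp (i + k) p (pcomp i n (toFn f) G) H =
      pcomp i (n + p - 1) (toFn f) (pcomp k p G H) := by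
  funext x
  rw [pcomp_eq_slotHom f i (n + p - 1) hi]
  simp only [pcomp_apply k, map_zsmul]
  rw [pcomp_apply, pcomp_apply, smul_smul, smul_smul, ← sgn_add, ← sgn_add]
  have hcast : ((n + p - 1 : ℕ) : ℤ) = n + p - 1 := by omega
  rw [hcast]
  congr 1
  · congr 1
    push_cast
    ring
  · change _ = toFn f (insertAt i (n + p - 1) x _)
    congr 1
    funext l
    rcases lt_trichotomy l i with h | h | h
    · simp [insertAt, h, show l < i + k by omega]
    · subst h
      simp only [insertAt, lt_irrefl, if_false, if_true]
      congr 1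
      funext j
      simp only [insertAt, add_lt_add_iff_left, add_right_inj, add_assoc]
      split_ifs
      · rfl
      · rfl
      · congr 1
        omega
    · simp only [insertAt, show ¬ l < i by omega, show ¬ l = i by omega,
        show ¬ l + n - 1 < i + k by omega, show ¬ l + n - 1 = i + k by omega, if_false]
      congr 1
      omega

/-- Insertions at distinct positions `i < j` of `F` commute up to `(-1)^{|g||H|}`.  Here `g` has to
depend on its first `n` arguments only. -/
lemma pcomp_pcomp_disjoint {n : ℕ} (g : MultilinearMap K (fun _ : Fin n => L) L) (p i j : ℕ)
    (hij : i < j) (F H : (ℕ → L) → L) :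
    pcomp (j + n - 1) p (pcomp i n F (toFn g)) H =
      sgn (((n : ℤ) - 1) * ((p : ℤ) - 1)) • pcomp i n (pcomp j p F H) (toFn g) := by
  funext x
  simp only [Pi.smul_apply, pcomp_apply, smul_smul, ← sgn_add]
  have hcast : ((j + n - 1 : ℕ) : ℤ) = j + n - 1 := by omega
  rw [hcast]
  congr 1
  · congr 1
    ring
  · congr 1
    funext l
    rcases lt_trichotomy l i with h | h | h
    · simp [insertAt, h, show l < j + n - 1 by omega, show l < j by omega]
    · subst h
      simp only [insertAt, lt_irrefl, if_false, if_true, hij]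
      refine toFn_congr g fun k hk => ?_
      simp [show l + k < j + n - 1 by omega]
    · rcases lt_trichotomy l j with h' | h' | h'
      · simp [insertAt, h', show ¬ l < i by omega, show ¬ l = i by omega,
          show l + n - 1 < j + n - 1 by omega]
      · subst h'
        simp only [insertAt, lt_irrefl, if_false, if_true, show ¬ l < i by omega,
          show ¬ l = i by omega]
        congr 1
        funext t
        simp only [show ¬ l + t < i by omega, show ¬ l + t = i by omega, if_false]
        congr 1
        omega
      · simp only [insertAt, show ¬ l < i by omega, show ¬ l = i by omega,
          show ¬ l < j by omega, show ¬ l = j by omega,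
          show ¬ l + n - 1 < j + n - 1 by omega, show ¬ l + n - 1 = j + n - 1 by omega,
          show ¬ l + p - 1 < i by omega, show ¬ l + p - 1 = i by omega, if_false]
        congr 1
        omega

/-- The sum of all `(F ∘ᵢ G) ∘ⱼ H` with `j < i < m`: both `G` and `H` are inserted into `F`, with
`H` to the left of `G`.  The arities of `F, G, H` are `m, n, p`. -/
def leftSum (m n p : ℕ) (F G H : (ℕ → L) → L) : (ℕ → L) → L :=
  ∑ i ∈ Finset.range m, ∑ j ∈ Finset.range i, pcomp j p (pcomp i n F G) H

/-- The graded pre-Lie identity: the last two summands, which form the associator of `f, g, H`, are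
exchanged, up to the sign `(-1)^{|g||H|}`, when `g` and `H` are. -/
lemma tcomp_tcomp {m n : ℕ} (p : ℕ) (f : MultilinearMap K (fun _ : Fin m => L) L)
    (g : MultilinearMap K (fun _ : Fin n => L) L) (H : (ℕ → L) → L) :
    tcomp (m + n - 1) p (tcomp m n (toFn f) (toFn g)) H =
      tcomp m (n + p - 1) (toFn f) (tcomp n p (toFn g) H) +
        leftSum m n p (toFn f) (toFn g) H +
        sgn (((n : ℤ) - 1) * ((p : ℤ) - 1)) • leftSum m p n (toFn f) H (toFn g) := by
  -- the part of `leftSum m p n f H g` with `g` at position `i`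
  have hswap : leftSum m p n (toFn f) H (toFn g) = ∑ i ∈ Finset.range m,
      ∑ t ∈ Finset.range (m - 1 - i),
        pcomp i n (pcomp (i + 1 + t) p (toFn f) H) (toFn g) := by
    unfold leftSum
    rw [Finset.sum_sigma', Finset.sum_sigma']
    refine Finset.sum_bij' (fun a _ => ⟨a.2, a.1 - a.2 - 1⟩)
      (fun b _ => ⟨b.1 + 1 + b.2, b.1⟩) ?_ ?_ ?_ ?_ ?_
    · rintro ⟨a, b⟩ h
      simp only [Finset.mem_sigma, Finset.mem_range] at h ⊢
      omega
    · rintro ⟨a, b⟩ h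
      simp only [Finset.mem_sigma, Finset.mem_range] at h ⊢
      omega
    · rintro ⟨a, b⟩ h
      simp only [Finset.mem_sigma, Finset.mem_range] at h
      simp only [Sigma.mk.injEq, heq_eq_eq, and_true]
      omega
    · rintro ⟨a, b⟩ h
      simp only [Sigma.mk.injEq, heq_eq_eq, true_and]
      omega
    · rintro ⟨a, b⟩ h
      simp only [Finset.mem_sigma, Finset.mem_range] at h
      rw [show b + 1 + (a - b - 1) = a by omega]
  -- `f ∘ᵢ (g • H)` distributes over the sum defining `g • H`
  have hnest : tcomp m (n + p - 1) (toFn f) (tcomp n p (toFn g) H) = ∑ i ∈ Finset.range m,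
      ∑ k ∈ Finset.range n, pcomp (i + k) p (pcomp i n (toFn f) (toFn g)) H := by
    refine Finset.sum_congr rfl fun i hi => ?_
    have hi := Finset.mem_range.mp hi
    rw [Finset.sum_congr rfl fun k hk =>
      pcomp_pcomp_nested f p i k hi (Finset.mem_range.mp hk) (toFn g) H]
    funext x
    simp only [Finset.sum_apply, pcomp_eq_slotHom f i _ hi, tcomp, map_sum, Finset.smul_sum]
  rw [hswap, hnest, leftSum, Finset.smul_sum, ← Finset.sum_add_distrib,
    ← Finset.sum_add_distrib]
  simp only [tcomp, pcomp_sum_left]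
  rw [Finset.sum_comm]
  refine Finset.sum_congr rfl fun i hi => ?_
  have hi := Finset.mem_range.mp hi
  rw [show m + n - 1 = i + n + (m - 1 - i) by omega, Finset.sum_range_add, Finset.sum_range_add,
    Finset.smul_sum, add_comm (∑ k ∈ Finset.range n, _)]
  congr 1
  refine Finset.sum_congr rfl fun t _ => ?_
  rw [← pcomp_pcomp_disjoint g p i (i + 1 + t) (by omega)]
  congr 1
  omega

/-! ### Double brackets -/

lemma gbr_gbr {m n p : ℕ} (F G : (ℕ → L) → L)
    (h : MultilinearMap K (fun _ : Fin p => L) L) :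
    gbr (m + n - 1) p (gbr m n F G) (toFn h) =
      tcomp (m + n - 1) p (tcomp m n F G) (toFn h) -
        sgn (((m : ℤ) - 1) * ((n : ℤ) - 1)) • tcomp (n + m - 1) p (tcomp n m G F) (toFn h) -
        (sgn (((m : ℤ) - 1) * ((p : ℤ) - 1)) * sgn (((n : ℤ) - 1) * ((p : ℤ) - 1))) •
          (tcomp p (m + n - 1) (toFn h) (tcomp m n F G) -
            sgn (((m : ℤ) - 1) * ((n : ℤ) - 1)) •
              tcomp p (n + m - 1) (toFn h) (tcomp n m G F)) := by
  rw [add_comm n m, ← tcomp_sub_smul_left, ← tcomp_sub_smul_right]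
  change tcomp _ _ (gbr m n F G) _ - _ • tcomp _ _ _ (gbr m n F G) =
    tcomp _ _ (gbr m n F G) _ - _ • tcomp _ _ _ (gbr m n F G)
  rcases Nat.eq_zero_or_pos (m + n) with h0 | h0
  · -- for `m = n = 0` the truncated arity `m + n - 1` gives a different sign, but `[F, G] = 0`
    obtain ⟨rfl, rfl⟩ : m = 0 ∧ n = 0 := by omega
    have hz : gbr 0 0 F G = 0 := by simp [gbr, tcomp]
    simp only [hz, tcomp_zero_right, smul_zero]
  · have hcast : ((m + n - 1 : ℕ) : ℤ) = m + n - 1 := by omega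
    rw [hcast, ← sgn_add]
    congr 3
    ring

/-- Graded Jacobi identity: in the endomorphism operad, the Gerstenhaber brackets satisfy
`(-1)^{|f||h|} [[f,g],h] + (-1)^{|g||f|} [[g,h],f] + (-1)^{|h||g|} [[h,f],g] = 0`,
so the commutator algebra is a graded Lie algebra with respect to the reduced degree. -/
theorem endop_graded_jacobi {m n p : ℕ} (f : MultilinearMap K (fun _ : Fin m => L) L) (g : MultilinearMap K (fun _ : Fin n => L) L) (h : MultilinearMap K (fun _ : Fin p => L) L) :
    sgn (((m : ℤ) - 1) * ((p : ℤ) - 1)) •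
        gbr (m + n - 1) p (gbr m n (toFn f) (toFn g)) (toFn h) +
      sgn (((n : ℤ) - 1) * ((m : ℤ) - 1)) •
        gbr (n + p - 1) m (gbr n p (toFn g) (toFn h)) (toFn f) +
      sgn (((p : ℤ) - 1) * ((n : ℤ) - 1)) •
        gbr (p + m - 1) n (gbr p m (toFn h) (toFn f)) (toFn g) = 0 := by
  rw [gbr_gbr, gbr_gbr, gbr_gbr, tcomp_tcomp p f g, tcomp_tcomp p g f, tcomp_tcomp m g h,
    tcomp_tcomp m h g, tcomp_tcomp n h f, tcomp_tcomp n f h]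
  rw [mul_comm ((n : ℤ) - 1) ((m : ℤ) - 1), mul_comm ((p : ℤ) - 1) ((m : ℤ) - 1),
    mul_comm ((p : ℤ) - 1) ((n : ℤ) - 1)]
  rcases sgn_cases (((m : ℤ) - 1) * ((n : ℤ) - 1)) with h₁ | h₁ <;>
  rcases sgn_cases (((m : ℤ) - 1) * ((p : ℤ) - 1)) with h₂ | h₂ <;>
  rcases sgn_cases (((n : ℤ) - 1) * ((p : ℤ) - 1)) with h₃ | h₃ <;>
  · rw [h₁, h₂, h₃]
    module
end

section
/- In the endomorphism operad of a K-module L, the right translations of the total composition are graded derivations of the cup algebra: for all homogeneous f, g, h one has (f ⌣ g) • h = f ⌣ (g • h) + (−1)^{|h|·deg g} (f • h) ⌣ g. -/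
/-!
Evaluated at a family `x`, the cup product is `(f ⌣ g)(x) = (-1)^{mn} μ(f(x), g(x_m, x_{m+1}, …))`
(`cupFn_apply`). Inserting `h` at a position `i < m` only affects the first argument of `μ`, apart
from shifting the argument of `g` by `p - 1`; inserting `h` at position `m + i` only affects the
second argument. Splitting the sum over `range (m + n)` accordingly, bilinearity of `μ` identifies
the two halves with the terms `(f • h) ⌣ g` and `f ⌣ (g • h)`, and the signs agree modulo 2.

The arities `n + p - 1` and `m + p - 1` are truncated only when `n = p = 0` or `m = p = 0`, and then
the corresponding total composition is an empty sum.
-/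

variable {K : Type*} [CommRing K] {L : Type*} [AddCommGroup L] [Module K L]

/-- Cup product `F ⌣ G := (-1)^m (Mu ∘₀ F) ∘ₘ G`, where `m, n` are the arities of `F, G`. -/
def cupFn (m n : ℕ) (Mu F G : (ℕ → L) → L) : (ℕ → L) → L :=
  sgn (m : ℤ) • pcomp m n (pcomp 0 m Mu F) G

lemma sgn_eq_of_even {a b : ℤ} (hab : Even (a - b)) : sgn a = sgn b := by
  have hpar : Even a.natAbs ↔ Even b.natAbs := by
    rw [Int.natAbs_even, Int.natAbs_even]
    exact Int.even_sub.mp hab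
  unfold sgn
  by_cases hb : Even b.natAbs
  · rw [hb.neg_one_pow, (hpar.mpr hb).neg_one_pow]
  · rw [(Nat.not_even_iff_odd.mp hb).neg_one_pow,
      (Nat.not_even_iff_odd.mp (fun ha => hb (hpar.mp ha))).neg_one_pow]

lemma sgn_mul_sgn (a b : ℤ) : sgn a * sgn b = sgn (a + b) := by
  have hpar : Even ((a.natAbs + b.natAbs : ℕ) : ℤ) ↔ Even (a + b) := by
    rw [Int.even_coe_nat, Nat.even_add, Int.even_add, Int.natAbs_even, Int.natAbs_even]
  have hsum : sgn ((a.natAbs + b.natAbs : ℕ) : ℤ) = sgn (a + b) :=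
    sgn_eq_of_even (Int.even_sub.mpr hpar)
  rw [← hsum]
  rw [sgn, sgn, sgn, Int.natAbs_natCast, pow_add]

/-- The binary operation `μ` in curried form, as a biadditive map; additivity in each argument is
all that the derivation identity uses. -/
def biOp (μ : MultilinearMap K (fun _ : Fin 2 => L) L) : L →+ L →+ L :=
  AddMonoidHom.mk' (fun a => AddMonoidHom.mk' (fun b => μ ![a, b]) (by
      intro b b'
      have key := μ.map_update_add ![a, b] 1 b b'
      have upd (z : L) : Function.update ![a, b] 1 z = ![a, z] := by
        ext k; fin_cases k <;> simp
      simpa only [upd] using key)) (by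
    intro a a'
    ext b
    have key := μ.map_update_add ![a, b] 0 a a'
    have upd (z : L) : Function.update ![a, b] 0 z = ![z, b] := by
      ext k; fin_cases k <;> simp
    simp only [upd] at key
    exact key)

/-- Closed form of the cup product. The hypothesis `hF` says that `F` only reads its first `m`
entries, as a function of arity `m` does. -/
lemma cupFn_apply (m n : ℕ) (μ : MultilinearMap K (fun _ : Fin 2 => L) L) (F G : (ℕ → L) → L)
    (hF : ∀ x y : ℕ → L, (∀ k < m, x k = y k) → F x = F y) (x : ℕ → L) :
    cupFn m n (toFn μ) F G x = sgn ((m : ℤ) * n) • biOp μ (F x) (G fun j => x (m + j)) := by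
  have hsgn : sgn ((m : ℤ) * n) = sgn (m : ℤ) * sgn ((m : ℤ) * ((n : ℤ) - 1)) := by
    rw [sgn_mul_sgn]
    congr 1
    ring
  have hzero : sgn (((0 : ℕ) : ℤ) * ((m : ℤ) - 1)) = 1 := by simp [sgn]
  rw [hsgn, mul_smul]
  simp only [cupFn, pcomp, Pi.smul_apply, hzero, one_smul]
  congr 2
  change μ _ = μ _
  congr 1
  ext k
  fin_cases k
  · simp only [Fin.zero_eta, lt_irrefl, if_false, if_true, Matrix.cons_val_zero]
    apply hF
    intro k hk
    simp [hk]
  · simp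

lemma toFn_local {m : ℕ} (f : MultilinearMap K (fun _ : Fin m => L) L) (x y : ℕ → L)
    (hxy : ∀ k < m, x k = y k) : toFn f x = toFn f y := by
  unfold toFn
  congr 1
  ext a
  exact hxy _ a.isLt

lemma tcomp_local {m p : ℕ} (f : MultilinearMap K (fun _ : Fin m => L) L)
    (h : MultilinearMap K (fun _ : Fin p => L) L) (x y : ℕ → L)
    (hxy : ∀ k < m + p - 1, x k = y k) :
    tcomp m p (toFn f) (toFn h) x = tcomp m p (toFn f) (toFn h) y := by
  simp only [tcomp, Finset.sum_apply]
  refine Finset.sum_congr rfl fun i hi => ?_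
  have him := Finset.mem_range.mp hi
  unfold pcomp
  congr 1
  apply toFn_local
  intro k hk
  split_ifs with h1 h2
  -- Even for `p = 0`, `k < i < m` gives `k < m + p - 1`.
  · exact hxy k (by omega)
  · apply toFn_local
    intro j hj
    exact hxy _ (by omega)
  · exact hxy _ (by omega)

/-- Inserting `h` into one of the first `m` inputs of `f ⌣ g` inserts it into `f`. -/
lemma pcomp_cup_left {m n p i : ℕ} (him : i < m) (μ : MultilinearMap K (fun _ : Fin 2 => L) L)
    (f : MultilinearMap K (fun _ : Fin m => L) L) (g : MultilinearMap K (fun _ : Fin n => L) L)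
    (h : MultilinearMap K (fun _ : Fin p => L) L) (x : ℕ → L) :
    pcomp i p (cupFn m n (toFn μ) (toFn f) (toFn g)) (toFn h) x =
      sgn ((m : ℤ) * n) •
        biOp μ (pcomp i p (toFn f) (toFn h) x) (toFn g fun j => x (m + p - 1 + j)) := by
  rw [pcomp, cupFn_apply _ _ _ _ _ (toFn_local f), smul_comm]
  congr 1
  rw [pcomp, map_zsmul, AddMonoidHom.zsmul_apply]
  congr 3
  ext j
  rw [if_neg (by omega), if_neg (by omega)]
  congr 1
  omega

/-- Inserting `h` into one of the last `n` inputs of `f ⌣ g` inserts it into `g`. -/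
lemma pcomp_cup_right {m n p i : ℕ} (μ : MultilinearMap K (fun _ : Fin 2 => L) L)
    (f : MultilinearMap K (fun _ : Fin m => L) L) (g : MultilinearMap K (fun _ : Fin n => L) L)
    (h : MultilinearMap K (fun _ : Fin p => L) L) (x : ℕ → L) :
    pcomp (m + i) p (cupFn m n (toFn μ) (toFn f) (toFn g)) (toFn h) x =
      sgn ((m : ℤ) * (n + p - 1)) •
        biOp μ (toFn f x) (pcomp i p (toFn g) (toFn h) fun j => x (m + j)) := by
  rw [pcomp, cupFn_apply _ _ _ _ _ (toFn_local f), pcomp, map_zsmul, smul_smul, smul_smul,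
    sgn_mul_sgn, sgn_mul_sgn]
  congr 1
  · congr 1
    push_cast
    ring
  congr 1
  · congr 1
    apply toFn_local
    intro k hk
    rw [if_pos (by omega)]
  congr 1
  ext j
  by_cases h1 : j < i
  · rw [if_pos (by omega), if_pos h1]
  by_cases h2 : j = i
  · subst h2
    simp [add_assoc]
  · rw [if_neg (by omega), if_neg (by omega), if_neg h1, if_neg h2]
    congr 1
    omega

/-- In the endomorphism operad, the right translations of the total composition are graded
derivations of the cup algebra:
`(f ⌣ g) • h = f ⌣ (g • h) + (-1)^{|h|·deg g} (f • h) ⌣ g`. -/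
theorem endop_right_translation_derivation {m n p : ℕ} (μ : MultilinearMap K (fun _ : Fin 2 => L) L)
    (f : MultilinearMap K (fun _ : Fin m => L) L) (g : MultilinearMap K (fun _ : Fin n => L) L) (h : MultilinearMap K (fun _ : Fin p => L) L) :
    tcomp (m + n) p (cupFn m n (toFn μ) (toFn f) (toFn g)) (toFn h) =
      cupFn m (n + p - 1) (toFn μ) (toFn f) (tcomp n p (toFn g) (toFn h)) +
        sgn (((p : ℤ) - 1) * (n : ℤ)) •
          cupFn (m + p - 1) n (toFn μ) (tcomp m p (toFn f) (toFn h)) (toFn g) := by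
  ext x
  have hleft : tcomp (m + n) p (cupFn m n (toFn μ) (toFn f) (toFn g)) (toFn h) x =
      sgn ((m : ℤ) * n) • biOp μ (tcomp m p (toFn f) (toFn h) x)
        (toFn g fun j => x (m + p - 1 + j)) +
      sgn ((m : ℤ) * (n + p - 1)) • biOp μ (toFn f x)
        (tcomp n p (toFn g) (toFn h) fun j => x (m + j)) := by
    simp only [tcomp, Finset.sum_apply, Finset.sum_range_add, map_sum, AddMonoidHom.finsetSum_apply,
      Finset.smul_sum]
    congr 1
    · exact Finset.sum_congr rfl fun i hi => pcomp_cup_left (Finset.mem_range.mp hi) μ f g h x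
    · exact Finset.sum_congr rfl fun i _ => pcomp_cup_right μ f g h x
  rw [hleft, Pi.add_apply, Pi.smul_apply, cupFn_apply _ _ _ _ _ (toFn_local f),
    cupFn_apply _ _ _ _ _ (tcomp_local f h), add_comm, smul_smul, sgn_mul_sgn]
  congr 1
  · rcases Nat.eq_zero_or_pos n with rfl | hn
    · simp [tcomp]
    · rw [Nat.cast_sub (by omega : 1 ≤ n + p)]
      push_cast
      rfl
  · rcases Nat.eq_zero_or_pos m with rfl | hm
    · simp [tcomp]
    · congr 1
      apply sgn_eq_of_even
      rw [Nat.cast_sub (by omega : 1 ≤ m + p)]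
      push_cast
      exact ⟨-(((p : ℤ) - 1) * n), by ring⟩
end
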